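/- Let q, P ∈ ℂ⁴, set q₊ := q + P/2 and q₋ := q − P/2, let B₊, B₋ ∈ ℂ with q₊² ≠ B₊² and q₋² ≠ B₋² (Minkowski squares), and set D := −q² + P²/4 + B₋B₊. Then the matrices q̸₊ − B₊·I and q̸₋ − B₋·I are invertible in M₄(ℂ), and (q̸₊ − B₊·I)⁻¹ · γ₅ · (q̸₋ − B₋·I)⁻¹ = ((q₊² − B₊²)(q₋² − B₋²))⁻¹ · [D·I + (B₋ − B₊)·q̸ + ((B₋ + B₊)/2)·P̸ − (1/2)(P̸q̸ − q̸P̸)] · γ₅. (This gives the explicit scalar, vector and tensor components, Eqs. (16)–(18) of the paper, of the Bethe–Salpeter amplitude obtained from a purely pseudoscalar kernel image under the approximation A(q²) ≡ 1.) -/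

import Mathlib

/-!
The Clifford relation `v̸² = v²` makes `v̸ + B` the inverse of `v̸ - B` up to the scalar
`v² - B²` (`slash_sub_mul_add`), so the sandwich is a multiple of `(q̸₊ + B₊) γ₅ (q̸₋ + B₋)`.
Since `γ₅` anticommutes with every slashed vector, it can be moved to the right, which leaves
`(q̸₊ + B₊)(B₋ - q̸₋) γ₅`. Expanding with `q± = q ± P/2` and using the Clifford relation again for
`q̸²` and `P̸²` gives the scalar, vector and tensor parts.
-/


open Matrix BigOperators

noncomputable section

abbrev M4 := Matrix (Fin 4) (Fin 4) ℂ

/-- Dirac gamma matrix γ⁰ = diag(1,1,−1,−1). -/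
def γ0 : M4 := !![1,0,0,0; 0,1,0,0; 0,0,-1,0; 0,0,0,-1]
/-- Dirac gamma matrix γ¹ = [[0,σ₁],[−σ₁,0]]. -/
def γ1 : M4 := !![0,0,0,1; 0,0,1,0; 0,-1,0,0; -1,0,0,0]
/-- Dirac gamma matrix γ² = [[0,σ₂],[−σ₂,0]]. -/
def γ2 : M4 := !![0,0,0,-Complex.I; 0,0,Complex.I,0; 0,Complex.I,0,0; -Complex.I,0,0,0]
/-- Dirac gamma matrix γ³ = [[0,σ₃],[−σ₃,0]]. -/
def γ3 : M4 := !![0,0,1,0; 0,0,0,-1; -1,0,0,0; 0,1,0,0]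
/-- γ₅ := i γ⁰γ¹γ²γ³. -/
def γ5 : M4 := Complex.I • (γ0 * γ1 * γ2 * γ3)

/-- Upper-index gamma matrices γ^μ. -/
def γup : Fin 4 → M4 := ![γ0, γ1, γ2, γ3]
/-- Diagonal of the Minkowski metric g = diag(1,−1,−1,−1). -/
def η : Fin 4 → ℂ := ![1, -1, -1, -1]
/-- Lower-index gamma matrices γ_μ (γ_0 = γ⁰, γ_k = −γᵏ). -/
def γdn (μ : Fin 4) : M4 := η μ • γup μ
/-- Minkowski metric g_{μν}. -/
def gmet (μ ν : Fin 4) : ℂ := if μ = ν then η μ else 0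

/-- Feynman slash v̸ = v⁰γ⁰ − v¹γ¹ − v²γ² − v³γ³. -/
def slash (v : Fin 4 → ℂ) : M4 := v 0 • γ0 - v 1 • γ1 - v 2 • γ2 - v 3 • γ3
/-- Complexification of a real 4-vector. -/
def cx (v : Fin 4 → ℝ) : Fin 4 → ℂ := fun μ => (v μ : ℂ)
/-- Minkowski square v² = (v⁰)² − (v¹)² − (v²)² − (v³)². -/
def msq (v : Fin 4 → ℂ) : ℂ := v 0 ^ 2 - v 1 ^ 2 - v 2 ^ 2 - v 3 ^ 2

/-- Scalar–pseudoscalar projector Pproj(M) = (1/4)(tr(M)·I + tr(γ₅M)·γ₅). -/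
def Pproj (M : M4) : M4 := (1/4 : ℂ) • (M.trace • (1 : M4) + (γ5 * M).trace • γ5)

/-- Extended projector Pproj′ keeping scalar, pseudoscalar, vector and axial-vector parts. -/
def Pproj' (M : M4) : M4 :=
  (1/4 : ℂ) • (M.trace • (1 : M4) + (γ5 * M).trace • γ5
    + ∑ μ : Fin 4, (γup μ * M).trace • γdn μ
    + ∑ μ : Fin 4, (γup μ * γ5 * M).trace • (γ5 * γdn μ))

/-- The Clifford relation in quadratic form. -/
lemma slash_mul_self (v : Fin 4 → ℂ) : slash v * slash v = msq v • (1 : M4) := by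
  ext i j
  fin_cases i <;> fin_cases j <;>
    simp [slash, msq, γ0, γ1, γ2, γ3, Matrix.mul_apply, Fin.sum_univ_four] <;>
    ring_nf <;> simp [Complex.I_sq] <;> ring

/-- In the Dirac representation `γ₅` exchanges the upper and lower spinor blocks. -/
lemma γ5_eq : γ5 = !![0,0,1,0; 0,0,0,1; 1,0,0,0; 0,1,0,0] := by
  ext i j
  fin_cases i <;> fin_cases j <;>
    simp [γ5, γ0, γ1, γ2, γ3]

lemma γ5_mul_slash (v : Fin 4 → ℂ) : γ5 * slash v = -(slash v * γ5) := by
  rw [γ5_eq]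
  ext i j
  fin_cases i <;> fin_cases j <;>
    simp [slash, γ0, γ1, γ2, γ3, Matrix.mul_apply, Fin.sum_univ_four] <;> ring

lemma slash_add (v w : Fin 4 → ℂ) : slash (v + w) = slash v + slash w := by
  simp only [slash, Pi.add_apply]
  module

lemma slash_sub (v w : Fin 4 → ℂ) : slash (v - w) = slash v - slash w := by
  simp only [slash, Pi.sub_apply]
  module

lemma slash_smul (c : ℂ) (v : Fin 4 → ℂ) : slash (c • v) = c • slash v := by
  simp only [slash, Pi.smul_apply, smul_eq_mul]
  module

lemma slash_sub_mul_add (v : Fin 4 → ℂ) (B : ℂ) :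
    (slash v - B • (1 : M4)) * (slash v + B • (1 : M4)) = (msq v - B ^ 2) • (1 : M4) := by
  simp only [sub_mul, mul_add, slash_mul_self, smul_mul_assoc, mul_smul_comm, one_mul, mul_one]
  module

lemma slash_sub_mul_inverse (v : Fin 4 → ℂ) (B : ℂ) (h : msq v ≠ B ^ 2) :
    (slash v - B • (1 : M4)) * ((msq v - B ^ 2)⁻¹ • (slash v + B • (1 : M4))) = 1 := by
  rw [mul_smul_comm, slash_sub_mul_add, inv_smul_smul₀ (sub_ne_zero.mpr h)]

/-- The numerator of the sandwich, with `γ₅` moved to the right. -/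
lemma slash_sandwich (q P : Fin 4 → ℂ) (Bp Bm : ℂ) :
    (slash (q + (1/2 : ℂ) • P) + Bp • (1 : M4)) * γ5 *
        (slash (q - (1/2 : ℂ) • P) + Bm • (1 : M4))
      = ((-msq q + msq P / 4 + Bm * Bp) • (1 : M4)
          + (Bm - Bp) • slash q + ((Bm + Bp) / 2) • slash P
          - (1/2 : ℂ) • (slash P * slash q - slash q * slash P)) * γ5 := by
  have hcomm : γ5 * (slash (q - (1/2 : ℂ) • P) + Bm • (1 : M4))
      = (Bm • (1 : M4) - slash (q - (1/2 : ℂ) • P)) * γ5 := by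
    rw [mul_add, γ5_mul_slash, sub_mul, mul_smul_comm, smul_mul_assoc, mul_one, one_mul]
    abel
  rw [mul_assoc, hcomm, ← mul_assoc]
  congr 1
  simp only [slash_add, slash_sub, slash_smul, add_mul, mul_sub, smul_mul_assoc,
    mul_smul_comm, one_mul, mul_one, slash_mul_self]
  module

/-- Invertibility of the inverse propagators and the explicit decomposition
(Eqs. (16)–(18) of the paper) of (q̸₊−B₊)⁻¹ γ₅ (q̸₋−B₋)⁻¹. -/
theorem propagator_sandwich_inverse (q P : Fin 4 → ℂ) (Bp Bm : ℂ)
    (h1 : msq (q + (1/2 : ℂ) • P) ≠ Bp ^ 2)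
    (h2 : msq (q - (1/2 : ℂ) • P) ≠ Bm ^ 2) :
    IsUnit (slash (q + (1/2 : ℂ) • P) - Bp • (1 : M4)) ∧
    IsUnit (slash (q - (1/2 : ℂ) • P) - Bm • (1 : M4)) ∧
    (slash (q + (1/2 : ℂ) • P) - Bp • (1 : M4))⁻¹ * γ5 *
        (slash (q - (1/2 : ℂ) • P) - Bm • (1 : M4))⁻¹
      = ((msq (q + (1/2 : ℂ) • P) - Bp ^ 2) *
          (msq (q - (1/2 : ℂ) • P) - Bm ^ 2))⁻¹ •
        (((-msq q + msq P / 4 + Bm * Bp) • (1 : M4)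
          + (Bm - Bp) • slash q + ((Bm + Bp) / 2) • slash P
          - (1/2 : ℂ) • (slash P * slash q - slash q * slash P)) * γ5) := by
  have hp := slash_sub_mul_inverse _ _ h1
  have hm := slash_sub_mul_inverse _ _ h2
  refine ⟨IsUnit.of_mul_eq_one _ hp, IsUnit.of_mul_eq_one _ hm, ?_⟩
  rw [Matrix.inv_eq_right_inv hp, Matrix.inv_eq_right_inv hm, ← slash_sandwich, smul_mul_assoc,
    smul_mul_assoc, mul_smul_comm, smul_smul, mul_inv]
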